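/- Let B be a bialgebra over a commutative ring A containing ℚ, and let P ∈ Prim(B) be a primitive element. Then: (i) for every m ≥ 0, (I⁺)^{*N}(P^m) = 0 for all N > m, so the series log_*(I) = ∑_{n≥1} ((−1)^{n−1}/n)(I⁺)^{*n} is summable at each power P^m; (ii) log_*(I)(P^m) = 0 for every m ≥ 2. -/

import Mathlib

/-!
For primitive `P`, `ε(P) = 0` and `Δ(P^m) = ∑ C(m,i) P^i ⊗ P^(m-i)`. Hence convolution powers of `I⁺`
act diagonally on the powers of `P`: `(I⁺)^{*n}(P^m) = a(n,m) P^m`, where `∑ₘ a(n,m) xᵐ / m!` is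
`(eˣ - 1)ⁿ`, because convolution of such diagonal maps multiplies exponential generating functions.

The factor `eˣ - 1` is divisible by `x`, so `a(n,m) = 0` for `n > m`. Differentiating `(eˣ - 1)ⁿ⁺¹`
gives `a(n+1,m+1) = (n+1) (a(n+1,m) + a(n,m))`. The factor `n+1` cancels the denominator of the
logarithm series, which therefore telescopes to `a(0,m)` at `P^(m+1)`; this is `0` for `m ≥ 1`.
-/

noncomputable section
namespace PaperD

variable (A : Type*) (B : Type*) [CommRing A] [Ring B] [Bialgebra A B]

/-- Convolution product `f * g = μ ∘ (f ⊗ g) ∘ Δ` on `End_A(B)` for a bialgebra `B`. -/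
def bconv (f g : B →ₗ[A] B) : B →ₗ[A] B :=
  (LinearMap.mul' A B) ∘ₗ (TensorProduct.map f g) ∘ₗ Coalgebra.comul

/-- Unit of the convolution algebra: `e = 1_B ∘ ε`. -/
def bunit : B →ₗ[A] B := (Algebra.linearMap A B) ∘ₗ Coalgebra.counit

/-- Convolution powers, `f^{*0} = e`. -/
def bconvPow (f : B →ₗ[A] B) : ℕ → (B →ₗ[A] B)
  | 0 => bunit A B
  | n + 1 => bconv A B f (bconvPow f n)

/-- `I⁺ = I − e`. -/
def Iplus : B →ₗ[A] B := LinearMap.id - bunit A B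

/-- The submodule of primitive elements `Prim(B) = {x | Δ x = x ⊗ 1 + 1 ⊗ x}`. -/
def prim : Submodule A B :=
  LinearMap.ker ((Coalgebra.comul (R := A) (A := B)) -
    ((TensorProduct.mk A B B).flip 1 + TensorProduct.mk A B B 1))

/-- Coefficients of the series `log(1+T)`. -/
def logCoeff (n : ℕ) : ℚ := if n = 0 then 0 else (-1 : ℚ) ^ (n - 1) / n

open TensorProduct PowerSeries

/-- The rational number `a(n,m) = m! [xᵐ] (eˣ - 1)ⁿ`, which counts the surjections from an
`m`-element set onto an `n`-element set. -/
def surjCoeff (n m : ℕ) : ℚ :=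
  (m.factorial : ℚ) * coeff m ((PowerSeries.exp ℚ - 1) ^ n)

lemma surjCoeff_zero_left (m : ℕ) : surjCoeff 0 m = if m = 0 then 1 else 0 := by
  rcases m with _ | m <;> simp [surjCoeff, coeff_one]

lemma surjCoeff_one_left (m : ℕ) : surjCoeff 1 m = if m = 0 then 0 else 1 := by
  rcases m with _ | m
  · simp [surjCoeff]
  · have : ((m + 1).factorial : ℚ) ≠ 0 := by exact_mod_cast Nat.factorial_ne_zero _
    simp [surjCoeff, coeff_exp, coeff_one, this]

lemma surjCoeff_eq_zero {n m : ℕ} (h : m < n) : surjCoeff n m = 0 := by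
  have hX : (X : PowerSeries ℚ) ∣ PowerSeries.exp ℚ - 1 := by
    simp [X_dvd_iff]
  have := X_pow_dvd_iff.1 (pow_dvd_pow_of_dvd hX n) m h
  simp [surjCoeff, this]

lemma surjCoeff_succ_succ (n m : ℕ) :
    surjCoeff (n + 1) (m + 1) = (n + 1) * (surjCoeff (n + 1) m + surjCoeff n m) := by
  -- The identity `d/dx (eˣ - 1)ⁿ⁺¹ = (n+1) ((eˣ - 1)ⁿ⁺¹ + (eˣ - 1)ⁿ)`.
  have h : d⁄dX ℚ ((PowerSeries.exp ℚ - 1) ^ (n + 1)) =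
      ((n + 1 : ℕ) : PowerSeries ℚ) *
        ((PowerSeries.exp ℚ - 1) ^ (n + 1) + (PowerSeries.exp ℚ - 1) ^ n) := by
    rw [Derivation.leibniz_pow]
    simp only [map_sub, Derivation.map_one_eq_zero, derivative_exp, smul_eq_mul,
      nsmul_eq_mul, Nat.add_sub_cancel]
    ring
  have h2 := congrArg (coeff m) h
  rw [← nsmul_eq_mul, map_nsmul, nsmul_eq_mul, map_add, coeff_derivative] at h2
  simp only [surjCoeff, Nat.factorial_succ]
  push_cast at h2 ⊢
  linear_combination (m.factorial : ℚ) * h2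

lemma surjCoeff_succ_left (n m : ℕ) :
    surjCoeff (n + 1) m = ∑ p ∈ Finset.HasAntidiagonal.antidiagonal m,
      (m.choose p.1 : ℚ) * (surjCoeff 1 p.1 * surjCoeff n p.2) := by
  rw [surjCoeff, pow_succ', coeff_mul, Finset.mul_sum]
  refine Finset.sum_congr rfl fun p hp => ?_
  obtain rfl := Finset.HasAntidiagonal.mem_antidiagonal.1 hp
  have := Nat.add_choose_mul_factorial_mul_factorial p.1 p.2
  rw [← Nat.choose_symm_add] at this
  rw [← this]
  simp only [surjCoeff, pow_one]
  push_cast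
  ring

lemma sum_logCoeff_mul_surjCoeff (m N : ℕ) :
    ∑ n ∈ Finset.range (N + 1), logCoeff n * surjCoeff n (m + 1) =
      surjCoeff 0 m - (-1) ^ N * surjCoeff N m := by
  induction N with
  | zero => simp [logCoeff]
  | succ N ih =>
    have : (N + 1 : ℚ) ≠ 0 := by positivity
    rw [Finset.sum_range_succ, ih, surjCoeff_succ_succ]
    simp only [logCoeff, Nat.add_sub_cancel, Nat.succ_ne_zero, if_false]
    push_cast
    field_simp
    ring

section

variable {A B} {P : B}

lemma comul_of_mem_prim (hP : P ∈ prim A B) :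
    Coalgebra.comul (R := A) P = P ⊗ₜ[A] 1 + 1 ⊗ₜ[A] P := by
  simpa [prim, sub_eq_zero] using hP

lemma counit_of_mem_prim (hP : P ∈ prim A B) : Coalgebra.counit (R := A) P = 0 := by
  have h := Coalgebra.rTensor_counit_comul (R := A) P
  rw [comul_of_mem_prim hP] at h
  -- Counitality gives `ε(P) • 1 = 0` in `B`; applying `ε` once more removes the unit.
  have h2 := congrArg (fun t => Coalgebra.counit (R := A) (TensorProduct.lid A B t)) h
  simpa using h2

lemma comul_pow_of_mem_prim (hP : P ∈ prim A B) (m : ℕ) :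
    Coalgebra.comul (R := A) (P ^ m) =
      ∑ p ∈ Finset.HasAntidiagonal.antidiagonal m, m.choose p.1 • ((P ^ p.1) ⊗ₜ[A] (P ^ p.2)) := by
  have hc : Commute (P ⊗ₜ[A] (1 : B)) ((1 : B) ⊗ₜ[A] P) := by
    simp [Commute, SemiconjBy]
  rw [Bialgebra.comul_pow, comul_of_mem_prim hP, hc.add_pow']
  simp [Algebra.TensorProduct.tmul_pow]

lemma bunit_pow_of_mem_prim (hP : P ∈ prim A B) (m : ℕ) :
    bunit A B (P ^ m) = if m = 0 then 1 else 0 := by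
  rcases m with _ | m
  · simp [bunit]
  · simp [bunit, Bialgebra.counit_pow, counit_of_mem_prim hP]

lemma Iplus_pow_of_mem_prim (hP : P ∈ prim A B) (m : ℕ) :
    Iplus A B (P ^ m) = if m = 0 then 0 else P ^ m := by
  rw [Iplus, LinearMap.sub_apply, LinearMap.id_apply, bunit_pow_of_mem_prim hP]
  split_ifs with h <;> simp [h]

/-- Convolution of maps acting diagonally on the powers of a primitive element is the binomial
convolution of their eigenvalue sequences. -/
lemma bconv_pow_of_mem_prim (hP : P ∈ prim A B) {f g : B →ₗ[A] B} {α β : ℕ → A}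
    (hf : ∀ i, f (P ^ i) = α i • P ^ i) (hg : ∀ i, g (P ^ i) = β i • P ^ i) (m : ℕ) :
    bconv A B f g (P ^ m) =
      (∑ p ∈ Finset.HasAntidiagonal.antidiagonal m, (m.choose p.1 : A) * (α p.1 * β p.2)) • P ^ m := by
  simp only [bconv, LinearMap.comp_apply, comul_pow_of_mem_prim hP, map_sum, map_nsmul,
    TensorProduct.map_tmul, LinearMap.mul'_apply, hf, hg, Finset.sum_smul]
  refine Finset.sum_congr rfl fun p hp => ?_
  rw [← Finset.HasAntidiagonal.mem_antidiagonal.1 hp, smul_mul_smul_comm, ← pow_add, mul_smul (Nat.cast _ : A),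
    Nat.cast_smul_eq_nsmul]

lemma bconvPow_Iplus_pow [Algebra ℚ A] (hP : P ∈ prim A B) (n m : ℕ) :
    bconvPow A B (Iplus A B) n (P ^ m) = algebraMap ℚ A (surjCoeff n m) • P ^ m := by
  induction n generalizing m with
  | zero =>
    rw [bconvPow, bunit_pow_of_mem_prim hP, surjCoeff_zero_left]
    split_ifs with h <;> simp [h]
  | succ n ih =>
    have h1 (i : ℕ) : Iplus A B (P ^ i) = algebraMap ℚ A (surjCoeff 1 i) • P ^ i := by
      rw [Iplus_pow_of_mem_prim hP, surjCoeff_one_left]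
      split_ifs <;> simp
    rw [bconvPow, bconv_pow_of_mem_prim hP h1 ih, surjCoeff_succ_left]
    simp

end

/-- Let `P` be a primitive element of a bialgebra `B` over a ring
`A ⊇ ℚ`. Then (i) `(I⁺)^{*N}(P^m) = 0` for `N > m`, so `log_*(I)` is summable at each
power `P^m`; (ii) `log_*(I)(P^m) = 0` for `m ≥ 2`. -/
theorem stmt_8 {A B : Type*} [CommRing A] [Algebra ℚ A] [Ring B] [Bialgebra A B]
    (P : B) (hP : P ∈ prim A B) :
    (∀ m N : ℕ, m < N → bconvPow A B (Iplus A B) N (P ^ m) = 0) ∧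
    (∀ m : ℕ, (Function.support fun n =>
      ((algebraMap ℚ A (logCoeff n)) • bconvPow A B (Iplus A B) n) (P ^ m)).Finite) ∧
    (∀ m : ℕ, 2 ≤ m →
      (∑ᶠ n, ((algebraMap ℚ A (logCoeff n)) • bconvPow A B (Iplus A B) n) (P ^ m)) = 0) := by
  have h0 (m N : ℕ) (h : m < N) : bconvPow A B (Iplus A B) N (P ^ m) = 0 := by
    simp [bconvPow_Iplus_pow hP, surjCoeff_eq_zero h]
  have hsupp (m : ℕ) : (Function.support fun n =>
      ((algebraMap ℚ A (logCoeff n)) • bconvPow A B (Iplus A B) n) (P ^ m)) ⊆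
        (Finset.range (m + 1) : Set ℕ) := by
    intro n hn
    by_contra h
    simp only [Finset.coe_range, Set.mem_Iio, not_lt] at h
    exact hn (by simp [h0 m n h])
  refine ⟨h0, fun m => (Finset.finite_toSet _).subset (hsupp m), fun m hm => ?_⟩
  rw [finsum_eq_sum_of_support_subset _ (hsupp m)]
  obtain ⟨k, rfl⟩ : ∃ k, m = k + 1 := ⟨m - 1, by omega⟩
  simp only [LinearMap.smul_apply, bconvPow_Iplus_pow hP, smul_smul, ← map_mul]
  rw [← Finset.sum_smul, ← map_sum, sum_logCoeff_mul_surjCoeff,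
    surjCoeff_eq_zero (Nat.lt_succ_self k), surjCoeff_zero_left, if_neg (by omega)]
  simp

end PaperD
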